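/- arXiv:1804.00360 — 4 statements merged into one kernel-verified Lean document; each statement's English description precedes it below -/
import Mathlib

section
/- Let G be a finite simple graph on vertex set V and let A, B be distinct stable sets of G. Then e_A and e_B form an edge of the stable set polytope SSP(G) (i.e., the segment [e_A, e_B] is a face of SSP(G)) if and only if for all stable sets C, D of G, the equality e_A + e_B = e_C + e_D implies {A, B} = {C, D}. -/
variable {V : Type*} [Fintype V] [DecidableEq V]

/-- Indicator vector of a finite set of vertices. -/
def indVec (A : Finset V) : V → ℝ := fun v => if v ∈ A then 1 else 0

/-- A set of vertices is stable if no two of its elements are adjacent. -/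
def IsStable (G : SimpleGraph V) (A : Finset V) : Prop :=
  ∀ v ∈ A, ∀ w ∈ A, ¬ G.Adj v w

/-- Stable set polytope of `G`: convex hull of the indicator vectors of stable sets. -/
def SSP (G : SimpleGraph V) : Set (V → ℝ) :=
  convexHull ℝ {x | ∃ A : Finset V, IsStable G A ∧ x = indVec A}

theorem SSP_nonneg (G : SimpleGraph V) {x : V → ℝ} (hx : x ∈ SSP G) (v : V) : 0 ≤ x v := by
  have hc : Convex ℝ {x : V → ℝ | 0 ≤ x v} := by
    intro x hx y hy a b ha hb hab
    simp only [Set.mem_ofPred_eq, Pi.add_apply, Pi.smul_apply, smul_eq_mul] at *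
    positivity
  refine convexHull_min ?_ hc hx
  rintro x ⟨A, -, rfl⟩
  simp only [Set.mem_ofPred_eq, indVec]
  split_ifs <;> norm_num

theorem SSP_le_one (G : SimpleGraph V) {x : V → ℝ} (hx : x ∈ SSP G) (v : V) : x v ≤ 1 := by
  have hc : Convex ℝ {x : V → ℝ | x v ≤ 1} := by
    intro x hx y hy a b ha hb hab
    simp only [Set.mem_ofPred_eq, Pi.add_apply, Pi.smul_apply, smul_eq_mul] at *
    nlinarith
  refine convexHull_min ?_ hc hx
  rintro x ⟨A, -, rfl⟩
  simp only [Set.mem_ofPred_eq, indVec]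
  split_ifs <;> norm_num

theorem SSP_adj (G : SimpleGraph V) {x : V → ℝ} (hx : x ∈ SSP G) (u v : V) (h : G.Adj u v) :
    x u + x v ≤ 1 := by
  have hc : Convex ℝ {x : V → ℝ | x u + x v ≤ 1} := by
    intro x hx y hy a b ha hb hab
    simp only [Set.mem_ofPred_eq, Pi.add_apply, Pi.smul_apply, smul_eq_mul] at *
    nlinarith
  refine convexHull_min ?_ hc hx
  rintro x ⟨A, hA, rfl⟩
  have := fun hu hv => hA u hu v hv h
  simp only [Set.mem_ofPred_eq, indVec]
  split_ifs <;> first | (exfalso; tauto) | norm_num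

theorem indVec_mem_SSP (G : SimpleGraph V) {A : Finset V} (hA : IsStable G A) :
    indVec A ∈ SSP G := subset_convexHull ℝ _ ⟨A, hA, rfl⟩

theorem indVec_inj {A B : Finset V} (h : indVec A = indVec B) : A = B := by
  ext v
  have := congrFun h v
  simp only [indVec] at this
  split_ifs at this <;> simp_all

theorem eq_of_indVec_mem_segment {A B C : Finset V}
    (h : indVec C ∈ segment ℝ (indVec A) (indVec B)) : C = A ∨ C = B := by
  obtain ⟨a, b, ha, hb, hab, h⟩ := h
  by_cases h0 : a = 0
  · right
    have : b = 1 := by linarith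
    subst h0 this
    exact (indVec_inj (by simpa using h)).symm
  by_cases h1 : b = 0
  · left
    have : a = 1 := by linarith
    subst h1 this
    exact (indVec_inj (by simpa using h)).symm
  left
  have ha' : 0 < a := lt_of_le_of_ne ha (Ne.symm h0)
  have hb' : 0 < b := lt_of_le_of_ne hb (Ne.symm h1)
  ext v
  have := congrFun h v
  simp only [indVec, Pi.add_apply, Pi.smul_apply, smul_eq_mul] at this
  split_ifs at this <;> simp_all

/-- The equality case of the valid inequalities propagates to endpoints. -/
theorem tight_of_combo {a b p q c : ℝ} (ha : 0 < a) (hb : 0 < b) (hab : a + b = 1)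
    (hp : p ≤ c) (hq : q ≤ c) (h : a * p + b * q = c) : p = c := by
  apply le_antisymm hp
  by_contra hlt
  have h1 : a * p < a * c := mul_lt_mul_of_pos_left (not_le.mp hlt) ha
  have h2 : b * q ≤ b * c := mul_le_mul_of_nonneg_left hq hb.le
  have : a * c + b * c = c := by rw [← add_mul, hab, one_mul]
  linarith

/-- A point on all the tight faces lies on the segment. -/
theorem mem_segment_of_tight (G : SimpleGraph V) (A B : Finset V)
    (hA : IsStable G A) (hB : IsStable G B) (hAB : A ≠ B)
    (H : ∀ C D : Finset V, IsStable G C → IsStable G D →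
        indVec A + indVec B = indVec C + indVec D →
          ({A, B} : Set (Finset V)) = {C, D})
    (y : V → ℝ) (hy : y ∈ SSP G)
    (h0 : ∀ v, v ∉ A → v ∉ B → y v = 0) (h1 : ∀ v, v ∈ A → v ∈ B → y v = 1)
    (h2 : ∀ u v, u ∈ A → v ∈ B → G.Adj u v → y u + y v = 1) :
    y ∈ segment ℝ (indVec A) (indVec B) := by
  classical
  let w : V → ℝ := fun v => if v ∈ A then y v else 1 - y v
  obtain ⟨v0, hv0⟩ : ∃ v, ¬ (v ∈ A ↔ v ∈ B) := by
    by_contra hcon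
    push Not at hcon
    exact hAB (Finset.ext hcon)
  let K : Finset V := Finset.univ.filter fun v => ¬ (v ∈ A ↔ v ∈ B) ∧ w v = w v0
  have hK : ∀ v, v ∈ K ↔ ¬ (v ∈ A ↔ v ∈ B) ∧ w v = w v0 := by intro v; simp [K]
  have hw : ∀ u v, u ∈ A → u ∉ B → v ∈ B → v ∉ A → G.Adj u v → w u = w v := by
    intro u v hu _ hv hv' h
    have := h2 u v hu hv h
    simp only [w, hu, hv', if_true, if_false]
    linarith
  have key : ∀ u v, u ∈ A → v ∈ B → G.Adj u v → (u ∈ K ↔ v ∈ K) := by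
    intro u v hu hv h
    have hu' : u ∉ B := fun hu' => hB u hu' v hv h
    have hv' : v ∉ A := fun hv' => hA u hu v hv' h
    rw [hK, hK, hw u v hu hu' hv hv' h]
    tauto
  have hC : IsStable G ((A \ K) ∪ (B ∩ K)) := by
    intro u hu v hv h
    simp only [Finset.mem_union, Finset.mem_sdiff, Finset.mem_inter] at hu hv
    have a1 := hA u
    have a2 := hB u
    have a3 := key u v
    have a4 := key v u
    have := h.symm
    rcases hu with hu | hu <;> rcases hv with hv | hv
    · exact hA u hu.1 v hv.1 h
    · exact hu.2 ((key u v hu.1 hv.1 h).2 hv.2)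
    · exact hv.2 ((key v u hv.1 hu.1 h.symm).2 hu.2)
    · exact hB u hu.1 v hv.1 h
  have hD : IsStable G ((B \ K) ∪ (A ∩ K)) := by
    intro u hu v hv h
    simp only [Finset.mem_union, Finset.mem_sdiff, Finset.mem_inter] at hu hv
    rcases hu with hu | hu <;> rcases hv with hv | hv
    · exact hB u hu.1 v hv.1 h
    · exact hu.2 ((key v u hv.1 hu.1 h.symm).1 hv.2)
    · exact hv.2 ((key u v hu.1 hv.1 h).1 hu.2)
    · exact hA u hu.1 v hv.1 h
  have hv0K : v0 ∈ K := (hK v0).2 ⟨hv0, rfl⟩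
  have hS := H _ _ hC hD (by
    ext v
    simp only [Pi.add_apply, indVec, Finset.mem_union, Finset.mem_sdiff, Finset.mem_inter]
    by_cases a : v ∈ A <;> by_cases b : v ∈ B <;> by_cases k : v ∈ K <;> simp [a, b, k])
  have hCm : ((A \ K) ∪ (B ∩ K)) ∈ ({A, B} : Set (Finset V)) := by rw [hS]; simp
  have hCB : (A \ K) ∪ (B ∩ K) = B := by
    rcases hCm with h | h
    · exfalso
      have := Finset.ext_iff.1 h v0
      simp only [Finset.mem_union, Finset.mem_sdiff, Finset.mem_inter] at this
      tauto
    · exact h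
  have hall : ∀ v, ¬ (v ∈ A ↔ v ∈ B) → w v = w v0 := by
    intro v hv
    have := Finset.ext_iff.1 hCB v
    simp only [Finset.mem_union, Finset.mem_sdiff, Finset.mem_inter] at this
    exact ((hK v).1 (by tauto)).2
  have n0 := SSP_nonneg G hy v0
  have n1 := SSP_le_one G hy v0
  refine ⟨w v0, 1 - w v0, ?_, ?_, by ring, ?_⟩
  · simp only [w]; split_ifs <;> linarith
  · simp only [w]; split_ifs <;> linarith
  · ext v
    simp only [indVec, Pi.add_apply, Pi.smul_apply, smul_eq_mul]
    by_cases a : v ∈ A <;> by_cases b : v ∈ B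
    · simp [a, b, h1 v a b]
    · rw [← hall v (by tauto)]; simp [a, b, w]
    · rw [← hall v (by tauto)]; simp [a, b, w]
    · simp [a, b, h0 v a b]

/-- Two distinct vertices `e_A`, `e_B` of the stable set polytope form an edge iff
`e_A + e_B` has a unique decomposition as a sum of two vertices. -/
theorem edge_SSP_iff (G : SimpleGraph V) (A B : Finset V)
    (hA : IsStable G A) (hB : IsStable G B) (hAB : A ≠ B) :
    IsExtreme ℝ (SSP G) (segment ℝ (indVec A) (indVec B)) ↔
      ∀ C D : Finset V, IsStable G C → IsStable G D →
        indVec A + indVec B = indVec C + indVec D →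
          ({A, B} : Set (Finset V)) = {C, D} := by
  constructor
  · intro hE C D hC hD h
    have hmem := hE.left_mem_of_mem_openSegment (indVec_mem_SSP G hC) (indVec_mem_SSP G hD)
      (z := (1/2 : ℝ) • indVec A + (1/2 : ℝ) • indVec B)
      ⟨1/2, 1/2, by norm_num, by norm_num, by norm_num, rfl⟩
      ⟨1/2, 1/2, by norm_num, by norm_num, by norm_num, by rw [← smul_add, ← smul_add, h]⟩
    rcases eq_of_indVec_mem_segment hmem with rfl | rfl
    · rw [indVec_inj (add_left_cancel h)]
    · rw [add_comm] at h
      rw [indVec_inj (add_left_cancel h), Set.pair_comm]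
  · intro H
    refine ⟨(convex_convexHull ℝ _).segment_subset (indVec_mem_SSP G hA) (indVec_mem_SSP G hB), ?_⟩
    rintro y hy z hz x ⟨s, t, hs, ht, hst, rfl⟩ ⟨a, b, ha, hb, hab, h⟩
    have hv : ∀ v, a * y v + b * z v = s * indVec A v + t * indVec B v := by
      intro v
      simpa using congrFun h v
    refine mem_segment_of_tight G A B hA hB hAB H y hy ?_ ?_ ?_
    · intro v hvA hvB
      have e := hv v
      simp only [indVec, hvA, hvB, if_false] at e
      have := tight_of_combo (p := - y v) (q := - z v) (c := 0) ha hb hab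
        (by linarith [SSP_nonneg G hy v]) (by linarith [SSP_nonneg G hz v]) (by linarith)
      linarith
    · intro v hvA hvB
      have e := hv v
      simp only [indVec, hvA, hvB, if_true] at e
      exact tight_of_combo ha hb hab (SSP_le_one G hy v) (SSP_le_one G hz v) (by linarith)
    · intro u v hu hv' hadj
      have hu' : u ∉ B := fun hu' => hB u hu' v hv' hadj
      have hv'' : v ∉ A := fun h' => hA u hu v h' hadj
      have e1 := hv u
      have e2 := hv v
      simp only [indVec, hu, hu', hv', hv'', if_true, if_false] at e1 e2
      exact tight_of_combo ha hb hab (SSP_adj G hy u v hadj) (SSP_adj G hz u v hadj) (by linarith)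
end

section
/- Let P be the convex hull of a finite set of points in ℝ^d and let a and b be two distinct extreme points (vertices) of P. Then a and b do NOT form an edge of P if and only if there exist k ≥ 1 extreme points v_1, …, v_k of P, each distinct from a and from b, and real coefficients γ_1, …, γ_k > 0, such that a − b = Σ_{i=1}^k γ_i (v_i − b). -/
theorem hull_aux {d : ℕ} (s : Finset (Fin d → ℝ)) :
    ∃ V : Finset (Fin d → ℝ),
      (V : Set (Fin d → ℝ)) = Set.extremePoints ℝ (convexHull ℝ (s : Set (Fin d → ℝ))) ∧
      convexHull ℝ (V : Set (Fin d → ℝ)) = convexHull ℝ (s : Set (Fin d → ℝ)) := by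
  have hfin : (Set.extremePoints ℝ (convexHull ℝ (s : Set (Fin d → ℝ)))).Finite :=
    s.finite_toSet.subset extremePoints_convexHull_subset
  refine ⟨hfin.toFinset, by simp, ?_⟩
  have h := closure_convexHull_extremePoints (s := convexHull ℝ (s : Set (Fin d → ℝ)))
    (s.finite_toSet.isCompact_convexHull (𝕜 := ℝ)) (convex_convexHull ℝ _)
  rw [(hfin.isClosed_convexHull (𝕜 := ℝ)).closure_eq] at h
  simpa using h

theorem convex_avg {d : ℕ} {C : Set (Fin d → ℝ)} (hC : Convex ℝ C) {ι : Type*} (T : Finset ι)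
    (w : ι → ℝ) (v : ι → Fin d → ℝ) (hw : ∀ i ∈ T, 0 ≤ w i) (hpos : 0 < ∑ i ∈ T, w i)
    (hv : ∀ i ∈ T, v i ∈ C) :
    ∃ y ∈ C, ∑ i ∈ T, w i • v i = (∑ i ∈ T, w i) • y := by
  refine ⟨T.centerMass w v, hC.centerMass_mem hw hpos hv, ?_⟩
  rw [Finset.centerMass, smul_inv_smul₀ hpos.ne']

/-- Two distinct vertices `a`, `b` of a polytope `P = conv(s)` do *not* form an edge of `P`
iff `a - b` is a positive combination of differences `vᵢ - b` for some vertices `vᵢ` of `P`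
distinct from `a` and `b`. -/
theorem not_edge_iff {d : ℕ} (s : Finset (Fin d → ℝ))
    (a b : Fin d → ℝ)
    (ha : a ∈ Set.extremePoints ℝ (convexHull ℝ (s : Set (Fin d → ℝ))))
    (hb : b ∈ Set.extremePoints ℝ (convexHull ℝ (s : Set (Fin d → ℝ))))
    (hab : a ≠ b) :
    ¬ IsExtreme ℝ (convexHull ℝ (s : Set (Fin d → ℝ))) (segment ℝ a b) ↔
      ∃ (k : ℕ), 1 ≤ k ∧
        ∃ (v : Fin k → (Fin d → ℝ)) (γ : Fin k → ℝ),
          (∀ i, v i ∈ Set.extremePoints ℝ (convexHull ℝ (s : Set (Fin d → ℝ)))) ∧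
          (∀ i, v i ≠ a) ∧ (∀ i, v i ≠ b) ∧ (∀ i, 0 < γ i) ∧
          a - b = ∑ i, γ i • (v i - b) := by
  classical
  have hPc := convex_convexHull ℝ (s : Set (Fin d → ℝ))
  constructor
  · intro hne
    obtain ⟨V, hV, hVP⟩ := hull_aux s
    have hseg : segment ℝ a b ⊆ convexHull ℝ (s : Set (Fin d → ℝ)) :=
      hPc.segment_subset ha.1 hb.1
    obtain ⟨x, hx, y, hy, z, hz, hzxy, hxn⟩ : ∃ x ∈ convexHull ℝ (s : Set (Fin d → ℝ)),
        ∃ y ∈ convexHull ℝ (s : Set (Fin d → ℝ)), ∃ z ∈ segment ℝ a b,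
          z ∈ openSegment ℝ x y ∧ x ∉ segment ℝ a b := by
      by_contra hcon
      push Not at hcon
      exact hne ⟨hseg, fun x hx y hy z hz hzxy => hcon x hx y hy z hz hzxy⟩
    rw [← hVP, Finset.mem_convexHull'] at hx hy
    obtain ⟨wx, hwx0, hwx1, hwx⟩ := hx
    obtain ⟨wy, hwy0, hwy1, hwy⟩ := hy
    obtain ⟨p, q, hp, hq, hpq, hzeq⟩ := hzxy
    obtain ⟨u, t, hu, ht, hut, hzab⟩ := hz
    have haV : a ∈ V := by rw [← Finset.mem_coe, hV]; exact ha
    have hbV : b ∈ V := by rw [← Finset.mem_coe, hV]; exact hb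
    set W := (V.erase a).erase b with hW
    have hbV' : b ∈ V.erase a := Finset.mem_erase.2 ⟨hab.symm, hbV⟩
    have split1 : ∀ f : (Fin d → ℝ) → ℝ, ∑ v ∈ V, f v = f a + (f b + ∑ v ∈ W, f v) := by
      intro f
      rw [← Finset.add_sum_erase _ _ haV, ← Finset.add_sum_erase _ _ hbV']
    have split2 : ∀ f : (Fin d → ℝ) → (Fin d → ℝ),
        ∑ v ∈ V, f v = f a + (f b + ∑ v ∈ W, f v) := by
      intro f
      rw [← Finset.add_sum_erase _ _ haV, ← Finset.add_sum_erase _ _ hbV']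
    have hWV : ∀ v ∈ W, v ∈ V := fun v hv => Finset.mem_of_mem_erase (Finset.mem_of_mem_erase hv)
    have hWb : ∀ v ∈ W, v ≠ b := fun v hv => Finset.ne_of_mem_erase hv
    have hWa : ∀ v ∈ W, v ≠ a := fun v hv =>
      Finset.ne_of_mem_erase (Finset.mem_of_mem_erase hv)
    have hVe : ∀ v ∈ V, v ∈ Set.extremePoints ℝ (convexHull ℝ (s : Set (Fin d → ℝ))) := by
      intro v hv; rw [← hV]; exact hv
    obtain ⟨v0, hv0, hv0x⟩ : ∃ v ∈ W, 0 < wx v := by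
      by_contra hcon
      push Not at hcon
      have h0 : ∀ v ∈ W, wx v = 0 := fun v hv => le_antisymm (hcon v hv) (hwx0 v (hWV v hv))
      rw [split1, Finset.sum_eq_zero h0, add_zero] at hwx1
      rw [split2, Finset.sum_eq_zero (fun v hv => by rw [h0 v hv, zero_smul]), add_zero] at hwx
      exact hxn ⟨wx a, wx b, hwx0 a haV, hwx0 b hbV, hwx1, hwx⟩
    let w : (Fin d → ℝ) → ℝ := fun v => p * wx v + q * wy v
    have hw0 : ∀ v ∈ V, 0 ≤ w v := fun v hv =>
      add_nonneg (mul_nonneg hp.le (hwx0 v hv)) (mul_nonneg hq.le (hwy0 v hv))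
    have hwv0 : 0 < w v0 :=
      add_pos_of_pos_of_nonneg (mul_pos hp hv0x) (mul_nonneg hq.le (hwy0 v0 (hWV _ hv0)))
    have hw1 : ∑ v ∈ V, w v = 1 := by
      simp only [w, Finset.sum_add_distrib, ← Finset.mul_sum, hwx1, hwy1]; linarith
    have hwz : ∑ v ∈ V, w v • v = z := by
      simp only [w, add_smul, mul_smul, Finset.sum_add_distrib, ← Finset.smul_sum, hwx, hwy]
      exact hzeq
    have hS : 0 < ∑ v ∈ W, w v :=
      Finset.sum_pos' (fun v hv => hw0 v (hWV v hv)) ⟨v0, hv0, hwv0⟩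
    -- u is the coefficient of a
    have hkey : (u - w a) • (a - b) = ∑ v ∈ W, w v • (v - b) := by
      rw [split1] at hw1
      rw [split2, ← hzab] at hwz
      simp only [smul_sub, Finset.sum_sub_distrib, ← Finset.sum_smul]
      have e1 : ∑ v ∈ W, w v • v = u • a + t • b - w a • a - w b • b := by
        rw [← hwz]; abel
      have e2 : ∑ v ∈ W, w v = 1 - w a - w b := by linarith
      have e3 : t = 1 - u := by linarith
      rw [e1, e2, e3]
      module
    by_cases hua : w a < u
    · have hc : 0 < u - w a := by linarith
      set T := W.filter (fun v => 0 < w v) with hT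
      have hTW : ∀ v ∈ T, v ∈ W := fun v hv => (Finset.mem_filter.1 hv).1
      have hsum : ∑ v ∈ T, w v • (v - b) = ∑ v ∈ W, w v • (v - b) := by
        apply Finset.sum_subset (Finset.filter_subset _ _)
        intro v hv hvT
        have : w v = 0 := le_antisymm
          (not_lt.1 fun h => hvT (Finset.mem_filter.2 ⟨hv, h⟩)) (hw0 v (hWV v hv))
        rw [this, zero_smul]
      refine ⟨T.card, Finset.card_pos.2 ⟨v0, Finset.mem_filter.2 ⟨hv0, hwv0⟩⟩,
        fun i => (T.equivFin.symm i : Fin d → ℝ),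
        fun i => (u - w a)⁻¹ * w (T.equivFin.symm i : Fin d → ℝ),
        fun i => hVe _ (hWV _ (hTW _ (T.equivFin.symm i).2)),
        fun i => hWa _ (hTW _ (T.equivFin.symm i).2),
        fun i => hWb _ (hTW _ (T.equivFin.symm i).2),
        fun i => mul_pos (inv_pos.2 hc) (Finset.mem_filter.1 (T.equivFin.symm i).2).2, ?_⟩
      rw [Equiv.sum_comp T.equivFin.symm
        (fun v : T => ((u - w a)⁻¹ * w (v : Fin d → ℝ)) • ((v : Fin d → ℝ) - b)),
        Finset.sum_coe_sort T (fun v => ((u - w a)⁻¹ * w v) • (v - b))]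
      simp only [mul_smul]
      rw [← Finset.smul_sum, hsum, ← hkey, inv_smul_smul₀ hc.ne']
    · exfalso
      have hC : Convex ℝ (convexHull ℝ (s : Set (Fin d → ℝ)) \ {b}) :=
        (isExtreme_singleton.2 hb).convex_sdiff hPc
      obtain ⟨y', hy', hyeq⟩ := convex_avg hC W w id (fun v hv => hw0 v (hWV v hv)) hS
        (fun v hv => ⟨(hVe v (hWV v hv)).1, hWb v hv⟩)
      simp only [id] at hyeq
      simp only [smul_sub, Finset.sum_sub_distrib, ← Finset.sum_smul, hyeq] at hkey
      set S := ∑ v ∈ W, w v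
      have hc : 0 ≤ w a - u := by linarith
      have hcS : 0 < w a - u + S := by linarith
      have hmem := hC (x := a) ⟨ha.1, hab⟩ hy'
        (div_nonneg hc hcS.le) (div_nonneg hS.le hcS.le) (by field_simp)
      apply hmem.2
      have : (w a - u) • a + S • y' = (w a - u + S) • b := by
        rw [← sub_eq_zero] at hkey ⊢
        rw [← neg_eq_zero, ← hkey]; module
      rw [Set.mem_singleton_iff, div_eq_inv_mul, div_eq_inv_mul, mul_smul, mul_smul, ← smul_add,
        this, inv_smul_smul₀ hcS.ne']
  · rintro ⟨k, hk, v, γ, hv, hva, hvb, hγ, heq⟩ hext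
    have hC := hext.convex_sdiff hPc
    have hG : 0 < ∑ i, γ i := Finset.sum_pos (fun i _ => hγ i) ⟨⟨0, hk⟩, Finset.mem_univ _⟩
    obtain ⟨y, hy, hyeq⟩ := convex_avg hC Finset.univ γ v (fun i _ => (hγ i).le) hG (by
      intro i _
      refine ⟨(hv i).1, fun h => ?_⟩
      rcases (mem_extremePoints_iff_forall_segment.1 (hv i)).2 a ha.1 b hb.1 h with h | h
      · exact hva i h.symm
      · exact hvb i h.symm)
    simp only [smul_sub, Finset.sum_sub_distrib, ← Finset.sum_smul, hyeq] at heq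
    set G := ∑ i, γ i
    have ha' : a = G • y + (1 - G) • b := by
      rw [sub_eq_iff_eq_add] at heq; rw [heq]; module
    rcases lt_or_ge G 1 with h1 | h1
    · have : a ∈ segment ℝ y b := ⟨G, 1 - G, hG.le, by linarith, by ring, ha'.symm⟩
      rcases (mem_extremePoints_iff_forall_segment.1 ha).2 y hy.1 b hb.1 this with h | h
      · exact hy.2 (h ▸ left_mem_segment ℝ a b)
      · exact hab h.symm
    · apply hy.2
      refine ⟨G⁻¹, 1 - G⁻¹, inv_nonneg.2 hG.le, sub_nonneg.2 (inv_le_one_of_one_le₀ h1),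
        by ring, ?_⟩
      rw [ha', smul_add, inv_smul_smul₀ hG.ne', smul_smul, add_assoc, ← add_smul]
      have : G⁻¹ * (1 - G) + (1 - G⁻¹) = 0 := by field_simp; ring
      rw [this, zero_smul, add_zero]
end

section
/- Let G be a finite simple graph on vertex set V, let r = max{|A| : A a stable set of G}, and let B(G) = {A : A stable in G and |A| = r}. Let A, B ∈ B(G) be distinct. Then e_A and e_B form an edge of the Birkhoff polytope BP(G) (i.e., the segment [e_A, e_B] is a face of BP(G)) if and only if for all C, D ∈ B(G), the equality e_A + e_B = e_C + e_D implies {A, B} = {C, D}. -/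
variable {V : Type*} [Fintype V] [DecidableEq V]

/-- Birkhoff polytope of `G` of rank `r`: convex hull of the indicator vectors of the
stable sets of cardinality `r`. -/
def BP (G : SimpleGraph V) (r : ℕ) : Set (V → ℝ) :=
  convexHull ℝ {x | ∃ A : Finset V, IsStable G A ∧ A.card = r ∧ x = indVec A}

theorem hull_aux_s6 {E : Type*} [AddCommGroup E] [Module ℝ E] (S T : Set E) (hT : Convex ℝ T)
    (Φ : Set ((E →ₗ[ℝ] ℝ) × ℝ)) (h1 : ∀ s ∈ S, ∀ p ∈ Φ, p.1 s ≤ p.2)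
    (h2 : ∀ s ∈ S, (∀ p ∈ Φ, p.1 s = p.2) → s ∈ T) :
    ∀ x ∈ convexHull ℝ S, (∀ p ∈ Φ, p.1 x ≤ p.2) ∧ ((∀ p ∈ Φ, p.1 x = p.2) → x ∈ T) := by
  suffices h : convexHull ℝ S ⊆
      {x | (∀ p ∈ Φ, p.1 x ≤ p.2) ∧ ((∀ p ∈ Φ, p.1 x = p.2) → x ∈ T)} from fun x hx => h hx
  apply convexHull_min
  · intro s hs
    exact ⟨h1 s hs, h2 s hs⟩
  · rw [convex_iff_forall_pos]
    rintro x ⟨hx1, hx2⟩ y ⟨hy1, hy2⟩ a b ha hb hab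
    refine ⟨?_, ?_⟩
    · intro p hp
      have := hx1 p hp
      have := hy1 p hp
      simp only [map_add, map_smul, smul_eq_mul]
      have : p.2 = a * p.2 + b * p.2 := by rw [← add_mul, hab, one_mul]
      nlinarith
    · intro he
      have key : ∀ p ∈ Φ, p.1 x = p.2 ∧ p.1 y = p.2 := by
        intro p hp
        have e1 := hx1 p hp
        have e2 := hy1 p hp
        have e3 := he p hp
        simp only [map_add, map_smul, smul_eq_mul] at e3
        have e4 : p.2 = a * p.2 + b * p.2 := by rw [← add_mul, hab, one_mul]
        constructor <;> nlinarith
      exact hT (hx2 fun p hp => (key p hp).1) (hy2 fun p hp => (key p hp).2) ha.le hb.le hab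

theorem extreme_aux {E : Type*} [AddCommGroup E] [Module ℝ E] (S T : Set E) (hT : Convex ℝ T)
    (hTS : T ⊆ convexHull ℝ S)
    (Φ : Set ((E →ₗ[ℝ] ℝ) × ℝ)) (h1 : ∀ s ∈ S, ∀ p ∈ Φ, p.1 s ≤ p.2)
    (h2 : ∀ s ∈ S, (∀ p ∈ Φ, p.1 s = p.2) → s ∈ T) (h3 : ∀ z ∈ T, ∀ p ∈ Φ, p.1 z = p.2) :
    IsExtreme ℝ (convexHull ℝ S) T := by
  have H := hull_aux_s6 S T hT Φ h1 h2
  refine ⟨hTS, ?_⟩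
  rintro x hx y hy z hz ⟨a, b, ha, hb, hab, rfl⟩
  apply (H x hx).2
  intro p hp
  have e1 := (H x hx).1 p hp
  have e2 := (H y hy).1 p hp
  have e3 := h3 _ hz p hp
  simp only [map_add, map_smul, smul_eq_mul] at e3
  have e4 : p.2 = a * p.2 + b * p.2 := by rw [← add_mul, hab, one_mul]
  nlinarith

theorem sum_aux {A B C D : Finset V} (c1 : ∀ v, v ∈ A → v ∈ B → v ∈ C)
    (c2 : ∀ v, v ∈ C → v ∈ A ∨ v ∈ B)
    (hD : ∀ v, v ∈ D ↔ (v ∈ A ∧ v ∈ B) ∨ ((v ∈ A ∨ v ∈ B) ∧ v ∉ C)) :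
    indVec A + indVec B = indVec C + indVec D := by
  ext v
  have h1 := c1 v
  have h2 := c2 v
  have h3 := hD v
  clear c1 c2 hD
  simp only [indVec, Pi.add_apply]
  by_cases a : v ∈ A <;> by_cases b : v ∈ B <;> by_cases c : v ∈ C <;> simp_all

theorem sum_indVec (A : Finset V) : ∑ v, indVec A v = A.card := by
  simp [indVec]

theorem seg_aux {A B C : Finset V} (hAB : A ≠ B)
    (h : indVec C ∈ segment ℝ (indVec A) (indVec B)) : C = A ∨ C = B := by
  obtain ⟨a, b, ha, hb, hab, h⟩ := h
  have : ∃ v, ¬ (v ∈ A ↔ v ∈ B) := by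
    by_contra! hh
    exact hAB (Finset.ext hh)
  obtain ⟨v, hv⟩ := this
  have hc := congrFun h v
  have : a = 0 ∨ b = 0 := by
    simp only [indVec, Pi.add_apply, Pi.smul_apply, smul_eq_mul] at hc
    split_ifs at hc <;> first | (left; linarith) | (right; linarith) | (exfalso; tauto)
  rcases this with rfl | rfl
  · right
    apply indVec_inj
    rw [← h]
    simp_all
  · left
    apply indVec_inj
    rw [← h]
    simp_all

set_option maxHeartbeats 1000000 in
/-- Two distinct vertices `e_A`, `e_B` of the Birkhoff polytope of `G` form an edge iff
`e_A + e_B` has a unique decomposition as a sum of two vertices of `BP(G)`. -/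
theorem edge_BP_iff (G : SimpleGraph V) (r : ℕ)
    (hr : IsGreatest {n : ℕ | ∃ A : Finset V, IsStable G A ∧ A.card = n} r)
    (A B : Finset V) (hA : IsStable G A ∧ A.card = r) (hB : IsStable G B ∧ B.card = r)
    (hAB : A ≠ B) :
    IsExtreme ℝ (BP G r) (segment ℝ (indVec A) (indVec B)) ↔
      ∀ C D : Finset V, IsStable G C ∧ C.card = r → IsStable G D ∧ D.card = r →
        indVec A + indVec B = indVec C + indVec D →
          ({A, B} : Set (Finset V)) = {C, D} := by
  have mem : ∀ C : Finset V, IsStable G C ∧ C.card = r → indVec C ∈ BP G r := fun C hC =>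
    subset_convexHull ℝ _ ⟨C, hC.1, hC.2, rfl⟩
  constructor
  · intro hE C D hC hD h
    have hm : (1/2 : ℝ) • indVec A + (1/2 : ℝ) • indVec B ∈
        segment ℝ (indVec A) (indVec B) :=
      ⟨1/2, 1/2, by norm_num, by norm_num, by norm_num, rfl⟩
    have hm2 : (1/2 : ℝ) • indVec A + (1/2 : ℝ) • indVec B ∈
        openSegment ℝ (indVec C) (indVec D) :=
      ⟨1/2, 1/2, by norm_num, by norm_num, by norm_num, by rw [← smul_add, ← smul_add, h]⟩
    have hCs := hE.left_mem_of_mem_openSegment (mem C hC) (mem D hD) hm hm2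
    rcases seg_aux hAB hCs with rfl | rfl
    · have : B = D := indVec_inj (add_left_cancel h)
      rw [this]
    · have : A = D := indVec_inj (by rw [add_comm] at h; exact add_left_cancel h)
      rw [this, Set.pair_comm]
  · intro hU
    let P : V → ((V → ℝ) →ₗ[ℝ] ℝ) := fun v => LinearMap.proj v
    have hseg : ∀ p : ((V → ℝ) →ₗ[ℝ] ℝ) × ℝ, p.1 (indVec A) = p.2 → p.1 (indVec B) = p.2 →
        ∀ z ∈ segment ℝ (indVec A) (indVec B), p.1 z = p.2 := by
      rintro p h1 h2 z ⟨a, b, ha, hb, hab, rfl⟩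
      simp only [map_add, map_smul, smul_eq_mul, h1, h2]
      rw [← add_mul, hab, one_mul]
    refine extreme_aux _ _ (convex_segment _ _)
      ((convex_convexHull ℝ _).segment_subset (mem A hA) (mem B hB))
      {p | (∃ v, v ∈ A ∧ v ∈ B ∧ p = (P v, 1)) ∨ (∃ v, v ∉ A ∧ v ∉ B ∧ p = (-P v, 0)) ∨
        (∃ v w, v ∈ A ∧ w ∈ B ∧ G.Adj v w ∧ p = (P v + P w, 1))} ?_ ?_ ?_
    · rintro s ⟨C, hC, -, rfl⟩ p (⟨v, -, -, rfl⟩ | ⟨v, -, -, rfl⟩ | ⟨v, w, -, -, hvw, rfl⟩)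
      · simp only [P, LinearMap.proj_apply, indVec]; split_ifs <;> norm_num
      · simp only [P, LinearMap.neg_apply, LinearMap.proj_apply, indVec]; split_ifs <;> norm_num
      · simp only [P, LinearMap.add_apply, LinearMap.proj_apply, indVec]
        split_ifs with h1 h2
        · exact absurd hvw (hC v h1 w h2)
        all_goals norm_num
    · rintro s ⟨C, hC, hCr, rfl⟩ hp
      have c1 : ∀ v, v ∈ A → v ∈ B → v ∈ C := by
        intro v h1 h2
        have := hp _ (Or.inl ⟨v, h1, h2, rfl⟩)
        by_contra h
        simp [P, indVec, h] at this
      have c2 : ∀ v, v ∈ C → v ∈ A ∨ v ∈ B := by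
        intro v h1
        by_contra! h
        have := hp _ (Or.inr (Or.inl ⟨v, h.1, h.2, rfl⟩))
        simp [P, indVec, h1] at this
      have c3 : ∀ v w, v ∈ A → w ∈ B → G.Adj v w → v ∈ C ∨ w ∈ C := by
        intro v w h1 h2 h3
        have := hp _ (Or.inr (Or.inr ⟨v, w, h1, h2, h3, rfl⟩))
        by_contra! h
        simp [P, indVec, h.1, h.2] at this
      let D : Finset V := (A ∩ B) ∪ ((A ∪ B) \ C)
      have hD : ∀ v, v ∈ D ↔ (v ∈ A ∧ v ∈ B) ∨ ((v ∈ A ∨ v ∈ B) ∧ v ∉ C) := by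
        intro v; simp [D]
      have hsum : indVec A + indVec B = indVec C + indVec D := by
        exact sum_aux c1 c2 hD
      have hDst : IsStable G D := by
        intro v hv w hw hvw
        have a1 := hA.1 v
        have a2 := hB.1 v
        have a3 := c3 v w
        have a4 := c3 w v
        have a5 := hvw.symm
        rw [hD] at hv hw
        have a6 : ¬ (v ∈ A ∧ w ∈ A) := fun h => a1 h.1 w h.2 hvw
        have a7 : ¬ (v ∈ B ∧ w ∈ B) := fun h => a2 h.1 w h.2 hvw
        clear a1 a2
        tauto
      have hDr : D.card = r := by
        have h := congrArg (fun f : V → ℝ => ∑ v, f v) hsum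
        simp only [Pi.add_apply, Finset.sum_add_distrib, sum_indVec, hA.2, hB.2, hCr] at h
        have : (r : ℝ) = D.card := by linarith
        exact_mod_cast this.symm
      have := hU C D ⟨hC, hCr⟩ ⟨hDst, hDr⟩ hsum
      have hCm : C ∈ ({A, B} : Set (Finset V)) := by rw [this]; simp
      rcases hCm with rfl | h
      · exact left_mem_segment _ _ _
      · rw [Set.mem_singleton_iff] at h
        subst h
        exact right_mem_segment _ _ _
    · intro z hz p hp
      refine hseg p ?_ ?_ z hz
      all_goals
        rcases hp with (⟨v, h1, h2, rfl⟩ | ⟨v, h1, h2, rfl⟩ | ⟨v, w, h1, h2, hvw, rfl⟩)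
      · simp [P, indVec, h1]
      · simp [P, indVec, h1]
      · have : w ∉ A := fun h => hA.1 v h1 w h hvw
        simp [P, indVec, h1, this]
      · simp [P, indVec, h2]
      · simp [P, indVec, h2]
      · have : v ∉ B := fun h => hB.1 v h w h2 hvw
        simp [P, indVec, h2, this]
end

section
/- Let G be a finite simple graph on vertex set V and let A and B be stable sets of G with B \ A nonempty. Then there exists a stable set C of G with C ≠ A such that: A ∩ B ⊆ C ⊆ A ∪ B; C ∩ (B \ A) ≠ ∅; and e_A and e_C form an edge of SSP(G) (i.e., the segment [e_A, e_C] is a face of SSP(G)). -/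
variable {V : Type*} [Fintype V] [DecidableEq V]

/-- Valid inequalities of the stable set polytope. -/
theorem ssp_bounds (G : SimpleGraph V) {x : V → ℝ} (hx : x ∈ SSP G) :
    (∀ v, 0 ≤ x v) ∧ (∀ v, x v ≤ 1) ∧ ∀ v w, G.Adj v w → x v + x w ≤ 1 := by
  have hc : Convex ℝ {x : V → ℝ | (∀ v, 0 ≤ x v) ∧ (∀ v, x v ≤ 1) ∧
      ∀ v w, G.Adj v w → x v + x w ≤ 1} := by
    rintro x ⟨h1, h2, h3⟩ y ⟨k1, k2, k3⟩ a b ha hb hab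
    refine ⟨fun v => ?_, fun v => ?_, fun v w hvw => ?_⟩ <;>
      simp only [Pi.add_apply, Pi.smul_apply, smul_eq_mul]
    · have := h1 v
      have := k1 v
      positivity
    · have := mul_le_mul_of_nonneg_left (h2 v) ha
      have := mul_le_mul_of_nonneg_left (k2 v) hb
      linarith
    · have := mul_le_mul_of_nonneg_left (h3 v w hvw) ha
      have := mul_le_mul_of_nonneg_left (k3 v w hvw) hb
      linarith
  refine convexHull_min ?_ hc hx
  rintro y ⟨S, hS, rfl⟩
  refine ⟨fun v => ?_, fun v => ?_, fun v w hvw => ?_⟩ <;> simp only [indVec]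
  · split_ifs <;> norm_num
  · split_ifs <;> norm_num
  · have := hS v
    split_ifs with h1 h2 h2
    · exact absurd hvw (hS v h1 w h2)
    all_goals norm_num

/-- A convex combination attaining an upper bound. -/
theorem eq_of_comb {a b p q M : ℝ} (ha : 0 < a) (hb : 0 < b) (hab : a + b = 1)
    (hp : p ≤ M) (hq : q ≤ M) (h : a * p + b * q = M) : p = M := by
  have h1 := mul_le_mul_of_nonneg_left hq hb.le
  have h2 : a * M ≤ a * p := by
    have : a * M + b * M = M := by rw [← add_mul, hab, one_mul]
    linarith
  exact le_antisymm hp (le_of_mul_le_mul_left h2 ha)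

/-- Given stable sets `A` and `B` with `B \ A ≠ ∅`, there is a stable set `C ≠ A` with
`A ∩ B ⊆ C ⊆ A ∪ B`, meeting `B \ A`, such that `e_A` and `e_C` form an edge of
`SSP(G)`. -/
theorem base_change (G : SimpleGraph V) (A B : Finset V)
    (hA : IsStable G A) (hB : IsStable G B) (hBA : (B \ A).Nonempty) :
    ∃ C : Finset V, IsStable G C ∧ C ≠ A ∧
      A ∩ B ⊆ C ∧ C ⊆ A ∪ B ∧ (C ∩ (B \ A)).Nonempty ∧
      IsExtreme ℝ (SSP G) (segment ℝ (indVec A) (indVec C)) := by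
  classical
  obtain ⟨r, hr⟩ := hBA
  have hrB : r ∈ B := (Finset.mem_sdiff.1 hr).1
  have hrA : r ∉ A := (Finset.mem_sdiff.1 hr).2
  let D : V → Prop := fun v => (v ∈ A ∧ v ∉ B) ∨ (v ∈ B ∧ v ∉ A)
  let R : V → V → Prop := fun v w => G.Adj v w ∧ D v ∧ D w
  let K : V → Prop := fun v => Relation.ReflTransGen R r v
  have hKD : ∀ v, K v → D v := by
    intro v hv
    rcases Relation.ReflTransGen.cases_tail hv with h | ⟨w, _, hw⟩
    · subst h
      exact Or.inr ⟨hrB, hrA⟩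
    · exact hw.2.2
  have hKr : K r := Relation.ReflTransGen.refl
  let C : Finset V := Finset.univ.filter (fun v => (v ∈ A ∧ ¬ K v) ∨ (v ∈ B ∧ K v))
  have hmem : ∀ v, v ∈ C ↔ (v ∈ A ∧ ¬ K v) ∨ (v ∈ B ∧ K v) := by
    intro v
    simp [C]
  have hcross : ∀ v w, v ∈ A → ¬ K v → w ∈ B → K w → ¬ G.Adj w v := by
    intro v w hv hvK hw hwK hadj
    apply hvK
    have hvB : v ∉ B := fun h => hB w hw v h hadj
    exact Relation.ReflTransGen.tail hwK ⟨hadj, hKD w hwK, Or.inl ⟨hv, hvB⟩⟩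
  have hCs : IsStable G C := by
    intro v hv w hw hadj
    rcases (hmem v).1 hv with ⟨h1, h2⟩ | ⟨h1, h2⟩ <;>
      rcases (hmem w).1 hw with ⟨h3, h4⟩ | ⟨h3, h4⟩
    · exact hA v h1 w h3 hadj
    · exact hcross v w h1 h2 h3 h4 hadj.symm
    · exact hcross w v h3 h4 h1 h2 hadj
    · exact hB v h1 w h3 hadj
  have hrC : r ∈ C := (hmem r).2 (Or.inr ⟨hrB, hKr⟩)
  have hAS : indVec A ∈ SSP G := subset_convexHull ℝ _ ⟨A, hA, rfl⟩
  have hCS : indVec C ∈ SSP G := subset_convexHull ℝ _ ⟨C, hCs, rfl⟩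
  refine ⟨C, hCs, fun h => hrA (h ▸ hrC), ?_, ?_, ⟨r, Finset.mem_inter.2 ⟨hrC, hr⟩⟩, ?_⟩
  · intro v hv
    rw [Finset.mem_inter] at hv
    rw [hmem]
    tauto
  · intro v hv
    rw [hmem] at hv
    rw [Finset.mem_union]
    tauto
  refine ⟨(convex_convexHull ℝ _).segment_subset hAS hCS, ?_⟩
  rintro x hx y hy z ⟨s, t, hs, ht, hst, rfl⟩ ⟨a, b, ha, hb, hab, hz⟩
  obtain ⟨x0, x1, x2⟩ := ssp_bounds G hx
  obtain ⟨y0, y1, y2⟩ := ssp_bounds G hy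
  have hz' : ∀ v, a * x v + b * y v = s * indVec A v + t * indVec C v := by
    intro v
    simpa using congrFun hz v
  have hKval : ∀ v, K v → (v ∈ B ∧ v ∉ A ∧ x v = x r) ∨ (v ∈ A ∧ v ∉ B ∧ x v = 1 - x r) := by
    intro v hv
    induction hv with
    | refl => exact Or.inl ⟨hrB, hrA, rfl⟩
    | @tail v w hv hvw ih =>
      have hKv : K v := hv
      have hKw : K w := Relation.ReflTransGen.tail hv hvw
      have hsum : x v + x w = 1 := by
        refine eq_of_comb ha hb hab (x2 v w hvw.1) (y2 v w hvw.1) ?_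
        have e1 := hz' v
        have e2 := hz' w
        have hA' := hA v
        have hB' := hB v
        have hDw := hKD w hKw
        have hadj := hvw.1
        rcases ih with ⟨p1, p2, _⟩ | ⟨p1, p2, _⟩ <;> rcases hDw with ⟨q1, q2⟩ | ⟨q1, q2⟩
        · simp [indVec, hmem, hKv, hKw, p1, p2, q1, q2] at e1 e2
          linarith
        · exact absurd hadj (hB v p1 w q1)
        · exact absurd hadj (hA v p1 w q1)
        · simp [indVec, hmem, hKv, hKw, p1, p2, q1, q2] at e1 e2
          linarith
      rcases ih with ⟨p1, p2, p3⟩ | ⟨p1, p2, p3⟩ <;> rcases hKD w hKw with ⟨q1, q2⟩ | ⟨q1, q2⟩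
      · exact Or.inr ⟨q1, q2, by linarith⟩
      · exact absurd hvw.1 (hB v p1 w q1)
      · exact absurd hvw.1 (hA v p1 w q1)
      · exact Or.inl ⟨q1, q2, by linarith⟩
  refine ⟨1 - x r, x r, by linarith [x1 r], x0 r, by ring, ?_⟩
  funext v
  simp only [Pi.add_apply, Pi.smul_apply, smul_eq_mul]
  have e := hz' v
  by_cases hK : K v
  · rcases hKval v hK with ⟨p1, p2, p3⟩ | ⟨p1, p2, p3⟩ <;> simp [indVec, hmem, hK, p1, p2, p3]
  · by_cases hvA : v ∈ A
    · have : x v = 1 := by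
        refine eq_of_comb ha hb hab (x1 v) (y1 v) ?_
        simpa [indVec, hmem, hK, hvA, hst] using e
      simp [indVec, hmem, hK, hvA, this]
    · have : -x v = 0 := by
        refine eq_of_comb (q := -y v) ha hb hab (by linarith [x0 v]) (by linarith [y0 v]) ?_
        simp [indVec, hmem, hK, hvA] at e
        linarith
      simp [indVec, hmem, hK, hvA]
      linarith
end
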